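/- arXiv:cs/0207030 — 7 statements merged into one kernel-verified Lean document; each statement's English description precedes it below -/
import Mathlib

section
/- A collective argumentation theory is negative if and only if it satisfies Importation: whenever Γ ↝ Δ ∪ Φ, also Γ ∪ Δ ↝ Φ. -/
/-- Monotonicity: the defining condition of a collective argumentation theory. -/
def Mono {A : Type*} (att : Set A → Set A → Prop) : Prop :=
  ∀ Γ Δ Γ' Δ' : Set A, att Γ Δ → att (Γ ∪ Γ') (Δ ∪ Δ')

/-- A collective argumentation theory is negative if Γ ↝ Γ ∪ Δ always implies Γ ↝ Δ. -/
def Negative {A : Type*} (att : Set A → Set A → Prop) : Prop :=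
  ∀ Γ Δ : Set A, att Γ (Γ ∪ Δ) → att Γ Δ

/-- Importation: part of an attacked set may be moved to the attacking side. The parts `Δ` and `Φ`
need not be disjoint. -/
def Importation {A : Type*} (att : Set A → Set A → Prop) : Prop :=
  ∀ Γ Δ Φ : Set A, att Γ (Δ ∪ Φ) → att (Γ ∪ Δ) Φ

section

variable {A : Type*} {att : Set A → Set A → Prop}

theorem Mono.att_of_subset (hmono : Mono att) {Γ Γ' Δ Δ' : Set A} (hΓ : Γ ⊆ Γ') (hΔ : Δ ⊆ Δ')
    (h : att Γ Δ) : att Γ' Δ' := by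
  simpa only [Set.union_eq_self_of_subset_left hΓ, Set.union_eq_self_of_subset_left hΔ]
    using hmono Γ Δ Γ' Δ' h

theorem Negative.importation (hneg : Negative att) (hmono : Mono att) : Importation att := by
  intro Γ Δ Φ h
  have enlarged : att (Γ ∪ Δ) ((Γ ∪ Δ) ∪ Φ) :=
    hmono.att_of_subset Set.subset_union_left
      (Set.union_subset_union_left Φ Set.subset_union_right) h
  exact hneg (Γ ∪ Δ) Φ enlarged

theorem Importation.negative (himp : Importation att) : Negative att := by
  intro Γ Δ h
  simpa only [Set.union_self] using himp Γ Γ Δ h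

end

theorem negative_iff_importation {A : Type*} (att : Set A → Set A → Prop)
    (hmono : Mono att) :
    Negative att ↔ ∀ Γ Δ Φ : Set A, att Γ (Δ ∪ Φ) → att (Γ ∪ Δ) Φ :=
  ⟨fun hneg => hneg.importation hmono, fun himp => Importation.negative himp⟩
end

section
/- A collective argumentation theory is positive if and only if it satisfies Exportation: whenever Γ ∪ Δ ↝ Φ, also Γ ↝ Δ ∪ Φ. -/
/-- A collective argumentation theory is positive if Γ ∪ Δ ↝ Δ always implies Γ ↝ Δ. -/
def Positive {A : Type*} (att : Set A → Set A → Prop) : Prop :=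
  ∀ Γ Δ : Set A, att (Γ ∪ Δ) Δ → att Γ Δ

section SemilatticeSup

variable {α : Type*} [SemilatticeSup α] {r : α → α → Prop}

theorem exportation_of_positive (hmono : Monotone (Function.uncurry r))
    (hpos : ∀ a b, r (a ⊔ b) b → r a b) {a b c : α} (h : r (a ⊔ b) c) : r a (b ⊔ c) := by
  have hle : (a ⊔ b, c) ≤ (a ⊔ (b ⊔ c), b ⊔ c) :=
    ⟨sup_le_sup_left le_sup_left a, le_sup_right⟩
  have henlarged : r (a ⊔ (b ⊔ c)) (b ⊔ c) := hmono hle h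
  exact hpos a (b ⊔ c) henlarged

theorem positive_of_exportation (hexp : ∀ a b c, r (a ⊔ b) c → r a (b ⊔ c)) {a b : α}
    (h : r (a ⊔ b) b) : r a b := by
  simpa only [sup_idem] using hexp a b b h

theorem positive_iff_exportation_general (hmono : Monotone (Function.uncurry r)) :
    (∀ a b, r (a ⊔ b) b → r a b) ↔ ∀ a b c, r (a ⊔ b) c → r a (b ⊔ c) :=
  ⟨fun hpos _ _ _ ↦ exportation_of_positive hmono hpos,
    fun hexp _ _ ↦ positive_of_exportation hexp⟩

end SemilatticeSup

theorem Mono.monotone_uncurry {A : Type*} {att : Set A → Set A → Prop} (hmono : Mono att) :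
    Monotone (Function.uncurry att) := by
  rintro ⟨Γ, Δ⟩ ⟨Γ', Δ'⟩ ⟨hΓ, hΔ⟩ (h : att Γ Δ)
  have hunion : att (Γ ∪ Γ') (Δ ∪ Δ') := hmono Γ Δ Γ' Δ' h
  rwa [Set.union_eq_self_of_subset_left hΓ, Set.union_eq_self_of_subset_left hΔ] at hunion

theorem positive_iff_exportation {A : Type*} (att : Set A → Set A → Prop)
    (hmono : Mono att) :
    Positive att ↔ ∀ Γ Δ Φ : Set A, att (Γ ∪ Δ) Φ → att Γ (Δ ∪ Φ) :=
  positive_iff_exportation_general hmono.monotone_uncurry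
end

section
/- If Γ is a negatively admissible set of arguments and Δ is a conflict-free set with Γ ⊆ Δ, then Δ is also negatively admissible. -/
/-- Γ negatively attacks Δ (Γ ↝⁻ Δ) if Γ ↝ Γ ∪ Δ. -/
def NegAtt {A : Type*} (att : Set A → Set A → Prop) (Γ Δ : Set A) : Prop :=
  att Γ (Γ ∪ Δ)

/-- Γ is conflict-free if it does not attack itself. -/
def ConflictFree {A : Type*} (att : Set A → Set A → Prop) (Γ : Set A) : Prop :=
  ¬ att Γ Γ

/-- Γ is negatively admissible if it is conflict-free and it negatively
counterattacks any set that negatively attacks it. -/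
def NegAdmissible {A : Type*} (att : Set A → Set A → Prop) (Γ : Set A) : Prop :=
  ConflictFree att Γ ∧ ∀ Δ : Set A, NegAtt att Δ Γ → NegAtt att Γ Δ

namespace Mono

variable {A : Type*} {att : Set A → Set A → Prop} {Γ Γ' Δ Δ' : Set A}

theorem att_of_subset_s4 (hmono : Mono att) (h : att Γ Δ) (hΓ : Γ ⊆ Γ') (hΔ : Δ ⊆ Δ') :
    att Γ' Δ' := by
  simpa only [Set.union_eq_right.mpr hΓ, Set.union_eq_right.mpr hΔ] using hmono Γ Δ Γ' Δ' h

theorem negAtt_of_subset (hmono : Mono att) (h : NegAtt att Γ Δ) (hΓ : Γ ⊆ Γ')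
    (hΔ : Δ ⊆ Γ' ∪ Δ') : NegAtt att Γ' Δ' :=
  hmono.att_of_subset_s4 h hΓ (Set.union_subset (Set.subset_union_of_subset_left hΓ Δ') hΔ)

end Mono

theorem negAdmissible_of_superset {A : Type*} (att : Set A → Set A → Prop)
    (hmono : Mono att) (Γ Δ : Set A)
    (hΓ : NegAdmissible att Γ) (hΔcf : ConflictFree att Δ) (hsub : Γ ⊆ Δ) :
    NegAdmissible att Δ := by
  refine ⟨hΔcf, fun Φ hΦΔ => ?_⟩
  -- `Φ` itself need not negatively attack the smaller set `Γ`, but `Φ ∪ Δ` does.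
  have attack : NegAtt att (Φ ∪ Δ) Γ :=
    hmono.negAtt_of_subset hΦΔ Set.subset_union_left
      (Set.subset_union_of_subset_left Set.subset_union_right Γ)
  have counterattack : NegAtt att Γ (Φ ∪ Δ) := hΓ.2 (Φ ∪ Δ) attack
  exact hmono.negAtt_of_subset counterattack hsub (Set.union_comm Φ Δ).subset
end

section
/- If a collective argumentation theory is both positive and negative, then its attack relation on single arguments is symmetric: {α} ↝ {β} always implies {β} ↝ {α}. -/
section

variable {A : Type*} {att : Set A → Set A → Prop} {Γ Γ' Δ Δ' : Set A}

theorem Mono.attacks_of_subset (hmono : Mono att) (hΓ : Γ ⊆ Γ') (hΔ : Δ ⊆ Δ')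
    (h : att Γ Δ) : att Γ' Δ' := by
  simpa only [Set.union_eq_self_of_subset_left hΓ, Set.union_eq_self_of_subset_left hΔ]
    using hmono Γ Δ Γ' Δ' h

theorem Positive.empty_attacks_union (hpos : Positive att) (hmono : Mono att)
    (h : att Γ Δ) : att ∅ (Γ ∪ Δ) := by
  have self_attack : att (∅ ∪ (Γ ∪ Δ)) (Γ ∪ Δ) :=
    hmono.attacks_of_subset (Set.subset_union_left.trans Set.subset_union_right)
      Set.subset_union_right h
  exact hpos ∅ (Γ ∪ Δ) self_attack

theorem Negative.attacks_of_empty_attacks_union (hneg : Negative att) (hmono : Mono att)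
    (h : att ∅ (Γ ∪ Δ)) : att Γ Δ :=
  hneg Γ Δ (hmono.attacks_of_subset (Set.empty_subset Γ) subset_rfl h)

theorem attacks_iff_empty_attacks_union (hmono : Mono att) (hpos : Positive att)
    (hneg : Negative att) : att Γ Δ ↔ att ∅ (Γ ∪ Δ) :=
  ⟨hpos.empty_attacks_union hmono, hneg.attacks_of_empty_attacks_union hmono⟩

end

theorem positive_negative_symmetric_general {A : Type*} (att : Set A → Set A → Prop)
    (hmono : Mono att) (hpos : Positive att) (hneg : Negative att)
    (Γ Δ : Set A) (h : att Γ Δ) : att Δ Γ := by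
  rw [attacks_iff_empty_attacks_union hmono hpos hneg] at h ⊢
  rwa [Set.union_comm Δ Γ]

theorem positive_negative_symmetric {A : Type*} (att : Set A → Set A → Prop)
    (hmono : Mono att) (hpos : Positive att) (hneg : Negative att)
    (α β : A) (h : att {α} {β}) : att {β} {α} :=
  positive_negative_symmetric_general att hmono hpos hneg {α} {β} h
end

section
/- The positive attack relation ↝⁺ derived from a collective argumentation theory ↝ is itself a collective argumentation theory (it satisfies Monotonicity), it extends ↝ (Γ ↝ Δ implies Γ ↝⁺ Δ), and it is positive; moreover it is the least such extension: for any positive collective argumentation theory ⇒ with Γ ↝ Δ implying Γ ⇒ Δ, Γ ↝⁺ Δ implies Γ ⇒ Δ. -/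
/-- Γ positively attacks Δ (Γ ↝⁺ Δ) if Γ ∪ Δ ↝ Δ. -/
def PosAtt {A : Type*} (att : Set A → Set A → Prop) (Γ Δ : Set A) : Prop :=
  att (Γ ∪ Δ) Δ

/-! Order relations between sets of arguments by implication. Then `PosAtt` is order-preserving and
idempotent, and its pre-fixed points are exactly the positive relations. Monotonicity makes it
extensive, so it yields the least positive relation above a collective argumentation theory. -/

section PosAtt

variable {A : Type*} {att att' : Set A → Set A → Prop}

theorem positive_iff_posAtt_le : Positive att ↔ PosAtt att ≤ att :=
  Iff.rfl

theorem monotone_posAtt : Monotone (PosAtt (A := A)) :=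
  fun _ _ hle Γ Δ => hle (Γ ∪ Δ) Δ

theorem posAtt_posAtt (att : Set A → Set A → Prop) : PosAtt (PosAtt att) = PosAtt att := by
  funext Γ Δ
  simp only [PosAtt, Set.union_assoc, Set.union_self]

theorem positive_posAtt (att : Set A → Set A → Prop) : Positive (PosAtt att) :=
  positive_iff_posAtt_le.mpr (posAtt_posAtt att).le

theorem posAtt_le_of_positive (hpos : Positive att') (hle : att ≤ att') : PosAtt att ≤ att' :=
  (monotone_posAtt hle).trans (positive_iff_posAtt_le.mp hpos)

theorem le_posAtt (hmono : Mono att) : att ≤ PosAtt att := by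
  intro Γ Δ h
  simpa only [PosAtt, Set.union_self] using hmono Γ Δ Δ Δ h

theorem mono_posAtt (hmono : Mono att) : Mono (PosAtt att) := by
  intro Γ Δ Γ' Δ' h
  have hunion : att ((Γ ∪ Δ) ∪ (Γ' ∪ Δ')) (Δ ∪ Δ') := hmono _ _ _ _ h
  rwa [Set.union_union_union_comm] at hunion

theorem posAtt_least_positive_extension_general (hmono : Mono att) :
    Mono (PosAtt att) ∧ IsLeast {att' | Positive att' ∧ att ≤ att'} (PosAtt att) :=
  ⟨mono_posAtt hmono, ⟨positive_posAtt att, le_posAtt hmono⟩,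
    fun _ ⟨hpos, hle⟩ => posAtt_le_of_positive hpos hle⟩

end PosAtt

theorem posAtt_least_positive_extension {A : Type*} (att : Set A → Set A → Prop)
    (hmono : Mono att) :
    Mono (PosAtt att) ∧
    (∀ Γ Δ : Set A, att Γ Δ → PosAtt att Γ Δ) ∧
    Positive (PosAtt att) ∧
    (∀ att' : Set A → Set A → Prop, Mono att' → Positive att' →
      (∀ Γ Δ : Set A, att Γ Δ → att' Γ Δ) →
      ∀ Γ Δ : Set A, PosAtt att Γ Δ → att' Γ Δ) := by
  obtain ⟨hmono_pos, ⟨hpos, hle⟩, hleast⟩ := posAtt_least_positive_extension_general hmono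
  exact ⟨hmono_pos, hle, hpos, fun _ _ hpos' hle' => hleast ⟨hpos', hle'⟩⟩
end

section
/- In a negative collective argumentation theory: (1) a set of arguments is admissible if and only if it is negatively admissible, and (2) every conflict-free set of arguments is positively admissible. -/
/-- A conflict-free Γ is admissible if it counterattacks any set attacking it. -/
def Admissible {A : Type*} (att : Set A → Set A → Prop) (Γ : Set A) : Prop :=
  ConflictFree att Γ ∧ ∀ Δ : Set A, att Δ Γ → att Γ Δ

/-- A conflict-free Γ is positively admissible if it positively counterattacks
any set positively attacking it. -/
def PosAdmissible {A : Type*} (att : Set A → Set A → Prop) (Γ : Set A) : Prop :=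
  ConflictFree att Γ ∧ ∀ Δ : Set A, PosAtt att Δ Γ → PosAtt att Γ Δ

/-!
In a negative theory `Γ` attacks `Δ` exactly when it attacks `Γ ∪ Δ`, so attack and negative attack
coincide. Applied to the attacker `Γ ∪ Δ`, the same equivalence shows that `Γ` positively attacks
`Δ` exactly when `Γ ∪ Δ` is self-conflicting. Positive attack is therefore symmetric, and every
positive attack is countered.
-/

section

variable {A : Type*} {att : Set A → Set A → Prop} {Γ Δ : Set A}

theorem Mono.monotone_right (hmono : Mono att) : Monotone (att Γ) := by
  intro Δ Δ' hsub hatt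
  simpa only [Set.union_empty, Set.union_eq_self_of_subset_left hsub] using hmono Γ Δ ∅ Δ' hatt

theorem Negative.negAtt_iff (hneg : Negative att) (hright : Monotone (att Γ)) :
    NegAtt att Γ Δ ↔ att Γ Δ :=
  ⟨hneg Γ Δ, fun hatt => hright Set.subset_union_right hatt⟩

theorem Negative.admissible_iff_negAdmissible (hneg : Negative att)
    (hright : ∀ Θ, Monotone (att Θ)) : Admissible att Γ ↔ NegAdmissible att Γ := by
  simp only [Admissible, NegAdmissible, hneg.negAtt_iff (hright _)]

theorem Negative.posAtt_iff_not_conflictFree_union (hneg : Negative att)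
    (hright : Monotone (att (Γ ∪ Δ))) : PosAtt att Γ Δ ↔ ¬ ConflictFree att (Γ ∪ Δ) :=
  calc
    PosAtt att Γ Δ ↔ NegAtt att (Γ ∪ Δ) Δ := (hneg.negAtt_iff hright).symm
    _ ↔ att (Γ ∪ Δ) (Γ ∪ Δ) := by rw [NegAtt, Set.union_assoc, Set.union_self]
    _ ↔ ¬ ConflictFree att (Γ ∪ Δ) := not_not.symm

theorem Negative.posAtt_comm (hneg : Negative att) (hright : Monotone (att (Γ ∪ Δ))) :
    PosAtt att Γ Δ ↔ PosAtt att Δ Γ := by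
  rw [hneg.posAtt_iff_not_conflictFree_union hright,
    hneg.posAtt_iff_not_conflictFree_union (Set.union_comm Γ Δ ▸ hright), Set.union_comm]

theorem ConflictFree.posAdmissible (hfree : ConflictFree att Γ) (hneg : Negative att)
    (hright : ∀ Θ, Monotone (att Θ)) : PosAdmissible att Γ :=
  ⟨hfree, fun _ => (hneg.posAtt_comm (hright _)).mp⟩

end

theorem negative_admissibility_general {A : Type*} (att : Set A → Set A → Prop)
    (hright : ∀ Γ, Monotone (att Γ)) (hneg : Negative att) :
    (∀ Γ : Set A, Admissible att Γ ↔ NegAdmissible att Γ) ∧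
    (∀ Γ : Set A, ConflictFree att Γ → PosAdmissible att Γ) :=
  ⟨fun _ => hneg.admissible_iff_negAdmissible hright,
    fun _ hfree => hfree.posAdmissible hneg hright⟩

theorem negative_admissibility {A : Type*} (att : Set A → Set A → Prop)
    (hmono : Mono att) (hneg : Negative att) :
    (∀ Γ : Set A, Admissible att Γ ↔ NegAdmissible att Γ) ∧
    (∀ Γ : Set A, ConflictFree att Γ → PosAdmissible att Γ) :=
  negative_admissibility_general att (fun _ => hmono.monotone_right) hneg
end

section
/- A collective argumentation theory is l-positive if and only if it is the positive closure of some local collective argumentation theory, i.e., a relation ⇒ satisfying Monotonicity is positive and semi-local if and only if there exists a local collective argumentation theory ↝ such that Γ ⇒ Δ holds exactly when Γ ∪ Δ ↝ Δ. -/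
/-- A collective argumentation theory is local if Γ ↝ Δ ∪ Δ' implies Γ ↝ Δ or Γ ↝ Δ'. -/
def Local {A : Type*} (att : Set A → Set A → Prop) : Prop :=
  ∀ Γ Δ Δ' : Set A, att Γ (Δ ∪ Δ') → att Γ Δ ∨ att Γ Δ'

/-- Semi-locality: Γ ↝ Δ ∪ Φ implies Γ ∪ Δ ↝ Φ or Γ ∪ Φ ↝ Δ. -/
def SemiLocal {A : Type*} (att : Set A → Set A → Prop) : Prop :=
  ∀ Γ Δ Φ : Set A, att Γ (Δ ∪ Φ) → att (Γ ∪ Δ) Φ ∨ att (Γ ∪ Φ) Δ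

/-!
Let `localCore r` relate `a` to `b` when `r` relates `a` to `a ⊓ b`, so that `a` attacks only
itself. Both `r` and `localCore r` have the same positive closure, since `(a ⊔ b) ⊓ b = b`, and a
monotone positive relation is its own positive closure. Since `a ⊔ a ⊓ b = a`, the extra premises in
the conclusion of semi-locality of `r` are absorbed, which makes `localCore r` local. Conversely,
the `a ⊔ b` in the positive closure supplies exactly those premises to a local relation.
-/

section SemilatticeSup

variable {α : Type*} [SemilatticeSup α] {r : α → α → Prop}

/-- Positivity of an attack relation, with a join-semilattice in place of the sets of arguments. -/
def IsPositiveAttack (r : α → α → Prop) : Prop :=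
  ∀ a b, r (a ⊔ b) b → r a b

/-- Locality of an attack relation, with a join-semilattice in place of the sets of arguments. -/
def IsLocalAttack (r : α → α → Prop) : Prop :=
  ∀ a b c, r a (b ⊔ c) → r a b ∨ r a c

/-- Semi-locality of an attack relation, with a join-semilattice in place of the sets of
arguments. -/
def IsSemiLocalAttack (r : α → α → Prop) : Prop :=
  ∀ a b c, r a (b ⊔ c) → r (a ⊔ b) c ∨ r (a ⊔ c) b

/-- The positive closure `↝⁺` of an attack relation `↝`. -/
def positiveClosure (r : α → α → Prop) (a b : α) : Prop :=
  r (a ⊔ b) b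

theorem monotone_uncurry_positiveClosure (hr : Monotone (Function.uncurry r)) :
    Monotone (Function.uncurry (positiveClosure r)) :=
  fun _ _ h ↦ hr (Prod.mk_le_mk.2 ⟨sup_le_sup h.1 h.2, h.2⟩)

theorem isPositiveAttack_positiveClosure : IsPositiveAttack (positiveClosure r) := by
  intro a b h
  rwa [positiveClosure, sup_assoc, sup_idem] at h

theorem IsLocalAttack.isSemiLocalAttack_positiveClosure (hr : IsLocalAttack r) :
    IsSemiLocalAttack (positiveClosure r) := by
  intro a b c h
  rw [positiveClosure, positiveClosure, sup_right_comm a c b, sup_assoc]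
  exact (hr _ b c h).symm

theorem IsPositiveAttack.positiveClosure_eq (hr : IsPositiveAttack r)
    (hmono : Monotone (Function.uncurry r)) : positiveClosure r = r := by
  ext a b
  exact ⟨hr a b, hmono (Prod.mk_le_mk.2 ⟨le_sup_left, le_rfl⟩)⟩

end SemilatticeSup

section Lattice

variable {α : Type*} [Lattice α] {r : α → α → Prop}

/-- The restriction of an attack relation to self-attacks: `a` attacks `b` when it attacks the part
of `b` that it contains. For l-positive `r` this is a local relation with positive closure `r`. -/
def localCore (r : α → α → Prop) (a b : α) : Prop :=
  r a (a ⊓ b)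

theorem monotone_uncurry_localCore (hr : Monotone (Function.uncurry r)) :
    Monotone (Function.uncurry (localCore r)) :=
  fun _ _ h ↦ hr (Prod.mk_le_mk.2 ⟨h.1, inf_le_inf h.1 h.2⟩)

theorem positiveClosure_localCore : positiveClosure (localCore r) = positiveClosure r := by
  ext a b
  rw [positiveClosure, localCore, inf_eq_right.2 le_sup_right, positiveClosure]

end Lattice

section DistribLattice

variable {α : Type*} [DistribLattice α] {r : α → α → Prop}

theorem IsSemiLocalAttack.isLocalAttack_localCore (hr : IsSemiLocalAttack r) :
    IsLocalAttack (localCore r) := by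
  intro a b c h
  rw [localCore, inf_sup_left] at h
  have hsplit : r (a ⊔ a ⊓ b) (a ⊓ c) ∨ r (a ⊔ a ⊓ c) (a ⊓ b) := hr _ _ _ h
  rw [sup_inf_self, sup_inf_self] at hsplit
  exact hsplit.symm

theorem lpositive_iff_positive_closure_of_local_general :
    (Monotone (Function.uncurry r) ∧ IsPositiveAttack r ∧ IsSemiLocalAttack r) ↔
      ∃ s : α → α → Prop,
        Monotone (Function.uncurry s) ∧ IsLocalAttack s ∧ r = positiveClosure s := by
  constructor
  · rintro ⟨hmono, hpos, hsemi⟩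
    refine ⟨localCore r, monotone_uncurry_localCore hmono, hsemi.isLocalAttack_localCore, ?_⟩
    rw [positiveClosure_localCore, hpos.positiveClosure_eq hmono]
  · rintro ⟨s, hmono, hlocal, rfl⟩
    exact ⟨monotone_uncurry_positiveClosure hmono, isPositiveAttack_positiveClosure,
      hlocal.isSemiLocalAttack_positiveClosure⟩

end DistribLattice

theorem mono_iff_monotone_uncurry {A : Type*} {R : Set A → Set A → Prop} :
    Mono R ↔ Monotone (Function.uncurry R) := by
  constructor
  · rintro hR ⟨Γ, Δ⟩ ⟨Γ', Δ'⟩ ⟨hΓ, hΔ⟩ h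
    have hunion : R (Γ ∪ Γ') (Δ ∪ Δ') := hR Γ Δ Γ' Δ' h
    rwa [Set.union_eq_self_of_subset_left hΓ, Set.union_eq_self_of_subset_left hΔ] at hunion
  · intro hR Γ Δ Γ' Δ'
    exact hR (Prod.mk_le_mk.2 ⟨Set.subset_union_left, Set.subset_union_left⟩)

theorem lpositive_iff_positive_closure_of_local {A : Type*}
    (R : Set A → Set A → Prop) (hmono : Mono R) :
    (Positive R ∧ SemiLocal R) ↔
      ∃ att : Set A → Set A → Prop, Mono att ∧ Local att ∧
        ∀ Γ Δ : Set A, R Γ Δ ↔ att (Γ ∪ Δ) Δ := by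
  have hgeneral := lpositive_iff_positive_closure_of_local_general (r := R)
  simp only [← mono_iff_monotone_uncurry, hmono, true_and, funext_iff, eq_iff_iff] at hgeneral
  -- The lattice notions unfold to the set ones, since `⊔` on `Set A` is `∪` by definition.
  exact hgeneral
end
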